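/- There is a Hopf algebra structure on the quantized enveloping algebra U = U_q(𝔤). Precisely: the assignments Δ(E_{α_i}) = E_{α_i}⊗1 + K_i⊗E_{α_i}, Δ(F_{α_i}) = F_{α_i}⊗K_i^{-1} + 1⊗F_{α_i}, Δ(K_i) = K_i⊗K_i (i ∈ I) extend to a well-defined ℚ(q)-algebra homomorphism Δ: U → U⊗U (i.e. they respect all defining relations of U), Δ is coassociative, and U admits a counit and antipode making (U, Δ) a Hopf algebra over ℚ(q). -/

import Mathlib

/-!
Common setup for the quantized enveloping algebra `U_q(𝔤)` of Chari–Xi,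
"Monomial bases of quantized enveloping algebras".

The base field is `𝔽 = ℚ(q)`, realized as `RatFunc ℚ` with `q = X`.  Given the Cartan matrix
`a : Fin n → Fin n → ℤ` and symmetrizing integers `d : Fin n → ℕ`, the algebra `U = U n a d`
is presented by generators `E i`, `F i`, `K i`, `K i ⁻¹` and the defining relations of
Proposition 1.1 of the paper.  `Uplus` is the subalgebra generated by the `E i`,
`Ediv i m = E i ^ m / [m]_{d i}!` are the divided powers, `𝒜 = ℤ[q,q⁻¹] ⊆ 𝔽`, and
`UA` is the `𝒜`-subalgebra generated by the divided powers.

Lusztig's braid automorphisms are abstracted as a family `T` of algebra automorphisms,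
constrained by the predicate `IsBraid` recording Lusztig's formulas on generators (which
determine `T` uniquely).  For a word `w` (a reduced expression) the PBW root vectors and PBW
monomials are `rootVec T w t m` (`= T_{i₁} ⋯ T_{i_t}(E_{i_{t+1}}^{(m)})`) and
`pbw T w [c₁, …, c_r] = E_{β₁}^{(c₁)} ⋯ E_{β_r}^{(c_r)}`, while
`mono w [c₁, …, c_r] = E_{α_{i₁}}^{(c₁)} ⋯ E_{α_{i_r}}^{(c_r)}` is a monomial in divided
powers of the Chevalley generators.

The root-lattice combinatorics is handled by `sRefl` (simple reflections acting on
coordinates w.r.t. the simple roots), `rootAt w t` (`= s_{i₁} ⋯ s_{i_t}(α_{i_{t+1}})`) and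
`applyWord`; a word is a reduced expression iff all the roots `rootAt w t` are positive
(`IsReducedWord`), and a reduced word represents the longest element `w₀` iff it moreover
sends every simple root to a negative root (`IsLongestWord`).
-/

noncomputable section
namespace ChariXi

/-- The base field `ℚ(q)`. -/
abbrev 𝔽 : Type := RatFunc ℚ

/-- The indeterminate `q`. -/
def qq : 𝔽 := RatFunc.X

/-- The quantum integer `[m]_d = (q^{dm} - q^{-dm})/(q^d - q^{-d})`. -/
def qInt (dd m : ℕ) : 𝔽 := (qq ^ (dd * m) - qq⁻¹ ^ (dd * m)) / (qq ^ dd - qq⁻¹ ^ dd)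

/-- The quantum factorial `[m]_d!`. -/
def qFact (dd : ℕ) : ℕ → 𝔽
  | 0 => 1
  | m + 1 => qInt dd (m + 1) * qFact dd m

/-- The quantum binomial coefficient `[m choose r]_d`. -/
def qBinom (dd m r : ℕ) : 𝔽 := qFact dd m / (qFact dd r * qFact dd (m - r))

/-- `𝒜 = ℤ[q,q⁻¹]` as a subring of `ℚ(q)`. -/
def 𝒜 : Subring 𝔽 := Subring.closure {qq, qq⁻¹}

/-- `ℤ[q⁻¹]` as a subring of `ℚ(q)`. -/
def 𝒜inv : Subring 𝔽 := Subring.closure {qq⁻¹}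

/-- `q⁻¹ ℤ[q⁻¹] ⊆ ℚ(q)`. -/
def qinvZqinv : Set 𝔽 := {x | ∃ y ∈ 𝒜inv, x = qq⁻¹ * y}

/-- Generators of `U_q(𝔤)`. -/
inductive Gen (n : ℕ) : Type
  | E : Fin n → Gen n
  | F : Fin n → Gen n
  | K : Fin n → Gen n
  | Kinv : Fin n → Gen n

variable (n : ℕ)

namespace Fr
/-- `E_{α_i}` in the free algebra. -/
def E (i : Fin n) : FreeAlgebra 𝔽 (Gen n) := FreeAlgebra.ι 𝔽 (Gen.E i)
/-- `F_{α_i}` in the free algebra. -/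
def F (i : Fin n) : FreeAlgebra 𝔽 (Gen n) := FreeAlgebra.ι 𝔽 (Gen.F i)
/-- `K_i` in the free algebra. -/
def K (i : Fin n) : FreeAlgebra 𝔽 (Gen n) := FreeAlgebra.ι 𝔽 (Gen.K i)
/-- `K_i⁻¹` in the free algebra. -/
def Kinv (i : Fin n) : FreeAlgebra 𝔽 (Gen n) := FreeAlgebra.ι 𝔽 (Gen.Kinv i)
end Fr

variable (a : Fin n → Fin n → ℤ) (d : Fin n → ℕ)

/-- The hypotheses on the Cartan data `(aᵢⱼ)`, `(dᵢ)` of a finite-dimensional complex simple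
Lie algebra used in the paper:  `aᵢᵢ = 2`, `aᵢⱼ ≤ 0` for `i ≠ j`, `(dᵢ aᵢⱼ)` is symmetric and
`dᵢ ∈ {1,2,3}`. -/
structure IsCartan : Prop where
  diag : ∀ i, a i i = 2
  offdiag : ∀ i j, i ≠ j → a i j ≤ 0
  symmetrizable : ∀ i j, (d i : ℤ) * a i j = (d j : ℤ) * a j i
  dmem : ∀ i, d i ∈ ({1, 2, 3} : Set ℕ)

/-- The defining relations of `U_q(𝔤)` (Proposition 1.1 of the paper). -/
inductive Rel : FreeAlgebra 𝔽 (Gen n) → FreeAlgebra 𝔽 (Gen n) → Prop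
  | KKinv (i : Fin n) : Rel (Fr.K n i * Fr.Kinv n i) 1
  | KinvK (i : Fin n) : Rel (Fr.Kinv n i * Fr.K n i) 1
  | KK (i j : Fin n) : Rel (Fr.K n i * Fr.K n j) (Fr.K n j * Fr.K n i)
  | KE (i j : Fin n) :
      Rel (Fr.K n i * Fr.E n j) ((qq ^ ((d i : ℤ) * a i j)) • (Fr.E n j * Fr.K n i))
  | KF (i j : Fin n) :
      Rel (Fr.K n i * Fr.F n j) ((qq ^ (-((d i : ℤ) * a i j))) • (Fr.F n j * Fr.K n i))
  | EF (i j : Fin n) :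
      Rel (Fr.E n i * Fr.F n j - Fr.F n j * Fr.E n i)
        (if i = j then (qq ^ (d i) - qq⁻¹ ^ (d i))⁻¹ • (Fr.K n i - Fr.Kinv n i) else 0)
  | serreE (i j : Fin n) (h : i ≠ j) :
      Rel (∑ r ∈ Finset.range ((1 - a i j).toNat + 1),
            ((-1 : 𝔽) ^ r * qBinom (d i) (1 - a i j).toNat r) •
              (Fr.E n i ^ r * Fr.E n j * Fr.E n i ^ ((1 - a i j).toNat - r))) 0
  | serreF (i j : Fin n) (h : i ≠ j) :
      Rel (∑ r ∈ Finset.range ((1 - a i j).toNat + 1),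
            ((-1 : 𝔽) ^ r * qBinom (d i) (1 - a i j).toNat r) •
              (Fr.F n i ^ r * Fr.F n j * Fr.F n i ^ ((1 - a i j).toNat - r))) 0

/-- The quantized enveloping algebra `U_q(𝔤)` over `ℚ(q)`. -/
abbrev U := RingQuot (Rel n a d)

/-- The quotient map. -/
def mk : FreeAlgebra 𝔽 (Gen n) →ₐ[𝔽] U n a d := RingQuot.mkAlgHom 𝔽 (Rel n a d)

/-- The Chevalley generator `E_{α_i}`. -/
def Eg (i : Fin n) : U n a d := mk n a d (Fr.E n i)
/-- The Chevalley generator `F_{α_i}`. -/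
def Fg (i : Fin n) : U n a d := mk n a d (Fr.F n i)
/-- The torus generator `K_i`. -/
def Kg (i : Fin n) : U n a d := mk n a d (Fr.K n i)
/-- The torus generator `K_i⁻¹`. -/
def Kinvg (i : Fin n) : U n a d := mk n a d (Fr.Kinv n i)

/-- The divided power `E_{α_i}^{(m)} = E_{α_i}^m / [m]_{dᵢ}!`. -/
def Ediv (i : Fin n) (m : ℕ) : U n a d := (qFact (d i) m)⁻¹ • Eg n a d i ^ m
/-- The divided power `F_{α_i}^{(m)}`. -/
def Fdiv (i : Fin n) (m : ℕ) : U n a d := (qFact (d i) m)⁻¹ • Fg n a d i ^ m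
/-- Integer powers `K_i^z`. -/
def Kzpow (i : Fin n) (z : ℤ) : U n a d :=
  if 0 ≤ z then Kg n a d i ^ z.toNat else Kinvg n a d i ^ (-z).toNat

/-- `U⁺`, the `ℚ(q)`-subalgebra generated by the `E_{α_i}`. -/
def Uplus : Subalgebra 𝔽 (U n a d) := Algebra.adjoin 𝔽 (Set.range (Eg n a d))

/-- The integral form `U_𝒜⁺`: the `ℤ[q,q⁻¹]`-subalgebra of `U⁺` generated by the divided
powers `E_{α_i}^{(m)}`. -/
def UA : Subalgebra 𝒜 (U n a d) :=
  Algebra.adjoin 𝒜 {x : U n a d | ∃ i m, x = Ediv n a d i m}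

/-- The homogeneous component `U⁺_ν` of `U⁺`:  the span of the monomials in the `E_{α_i}`
in which `i` occurs exactly `ν i` times (extended to integer `ν`, with `U⁺_ν = 0` if some
`ν i < 0`). -/
def wtSpace (ν : Fin n → ℤ) : Submodule 𝔽 (U n a d) :=
  Submodule.span 𝔽
    {x : U n a d | ∃ l : List (Fin n),
      x = (l.map (Eg n a d)).prod ∧ ∀ i, (l.count i : ℤ) = ν i}

/-- Lusztig's formulas for the braid group operator `Tᵢ` on generators; these determine the
automorphism `Tᵢ` uniquely. -/
structure IsBraid (T : Fin n → U n a d ≃ₐ[𝔽] U n a d) : Prop where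
  TEself : ∀ i m, T i (Ediv n a d i m)
      = ((-1 : 𝔽) ^ m * (qq ^ (m * (m - 1)))⁻¹) • (Kinvg n a d i ^ m * Fdiv n a d i m)
  TFself : ∀ i m, T i (Fdiv n a d i m)
      = ((-1 : 𝔽) ^ m * qq ^ (m * (m - 1))) • (Ediv n a d i m * Kg n a d i ^ m)
  TE : ∀ i j m, i ≠ j → T i (Ediv n a d j m)
      = ∑ s ∈ Finset.range (m * (-(a i j)).toNat + 1),
          ((-1 : 𝔽) ^ s * (qq ^ s)⁻¹) •
            (Ediv n a d i s * Ediv n a d j m * Ediv n a d i (m * (-(a i j)).toNat - s))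
  TF : ∀ i j m, i ≠ j → T i (Fdiv n a d j m)
      = ∑ s ∈ Finset.range (m * (-(a i j)).toNat + 1),
          ((-1 : 𝔽) ^ s * qq ^ s) •
            (Fdiv n a d i (m * (-(a i j)).toNat - s) * Fdiv n a d j m * Fdiv n a d i s)
  TK : ∀ i j, T i (Kg n a d j) = Kg n a d j * Kzpow n a d i (-(a i j))

variable (T : Fin n → U n a d ≃ₐ[𝔽] U n a d)

/-- The PBW root vector `E_{β_{t+1}}^{(m)} = T_{i₁} ⋯ T_{i_t} (E_{α_{i_{t+1}}}^{(m)})`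
associated to position `t` (0-based) of the word `w = [i₁, i₂, …]`. -/
def rootVec : List (Fin n) → ℕ → ℕ → U n a d
  | [], _, _ => 1
  | i :: _, 0, m => Ediv n a d i m
  | i :: w, t + 1, m => T i (rootVec w t m)

/-- The PBW monomial `E_𝐜 = E_{β₁}^{(c₁)} ⋯ E_{β_r}^{(c_r)}` for the word `w` and exponent
list `cs`. -/
def pbw : List (Fin n) → List ℕ → U n a d
  | _, [] => 1
  | [], _ => 1
  | i :: w, c :: cs => Ediv n a d i c * T i (pbw w cs)

/-- The monomial `M_𝐜 = E_{α_{j₁}}^{(c₁)} ⋯ E_{α_{j_r}}^{(c_r)}` in divided powers of the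
Chevalley generators, for the word `w = [j₁, …, j_r]`. -/
def mono : List (Fin n) → List ℕ → U n a d
  | _, [] => 1
  | [], _ => 1
  | i :: w, c :: cs => Ediv n a d i c * mono w cs

/-- `d_β` for the root `β` in position `t` of the word `w`: equals `d_{i_{t+1}}`. -/
def dAt : List (Fin n) → ℕ → ℕ
  | [], _ => 1
  | i :: _, 0 => d i
  | _ :: w, t + 1 => dAt w t

/-- The simple root `α_i` in coordinates. -/
def simpleRoot (i : Fin n) : Fin n → ℤ := fun k => if k = i then 1 else 0

/-- The simple reflection `s_i` acting on the root lattice: `s_i α_j = α_j - a_{ij} α_i`. -/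
def sRefl (i : Fin n) (v : Fin n → ℤ) : Fin n → ℤ :=
  fun k => v k - (if k = i then ∑ j, a i j * v j else 0)

/-- The positive root `β_{t+1} = s_{i₁} ⋯ s_{i_t} (α_{i_{t+1}})` associated to position `t`
(0-based) of the word `w`. -/
def rootAt : List (Fin n) → ℕ → (Fin n → ℤ)
  | [], _ => 0
  | i :: _, 0 => simpleRoot n i
  | i :: w, t + 1 => sRefl n a i (rootAt w t)

/-- The action of the word `w = [i₁, …, i_r]`, i.e. of `s_{i₁} ⋯ s_{i_r}`, on the root
lattice. -/
def applyWord : List (Fin n) → (Fin n → ℤ) → (Fin n → ℤ)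
  | [], v => v
  | i :: w, v => sRefl n a i (applyWord w v)

/-- A word is a reduced expression iff all the associated roots `β_t` are positive. -/
def IsReducedWord (w : List (Fin n)) : Prop :=
  ∀ t < w.length, ∀ i, 0 ≤ rootAt n a w t i

/-- A word is a reduced expression of the longest element `w₀` iff it is reduced and sends
every simple root to a negative root. -/
def IsLongestWord (w : List (Fin n)) : Prop :=
  IsReducedWord n a w ∧ ∀ i j, applyWord n a w (simpleRoot n i) j ≤ 0

/-- Strict lexicographic order on `ℕ^r`, with `(1,0,…,0) > (0,1,…,0) > ⋯ > (0,…,0,1)`: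
`c < e` iff at the first index where they differ, `e` is larger. -/
def lexLt {r : ℕ} (c e : Fin r → ℕ) : Prop :=
  ∃ t : Fin r, (∀ s : Fin r, s < t → c s = e s) ∧ c t < e t

/-- Reflexive lexicographic order on `ℕ^r`. -/
def lexLe {r : ℕ} (c e : Fin r → ℕ) : Prop := c = e ∨ lexLt c e

end ChariXi

/-!
STATEMENT 0 (Proposition 1.1): `U = U_q(𝔤)` is a Hopf algebra over `ℚ(q)`: the assignments
`Δ(E_i) = E_i ⊗ 1 + K_i ⊗ E_i`, `Δ(F_i) = F_i ⊗ K_i⁻¹ + 1 ⊗ F_i`, `Δ(K_i) = K_i ⊗ K_i`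
extend to a well-defined `ℚ(q)`-algebra homomorphism `Δ : U → U ⊗ U`, `Δ` is coassociative,
and `U` admits a counit `ε` and an antipode `S` making `(U, Δ, ε, S)` a Hopf algebra.
-/

open ChariXi
open scoped TensorProduct


namespace ChariXi
open Finset

theorem qq_ne_zero : qq ≠ 0 := RatFunc.X_ne_zero

theorem qq_pow_ne_one {k : ℕ} (hk : k ≠ 0) : qq ^ k ≠ 1 := by
  intro h
  have h' : (Polynomial.X ^ k : Polynomial ℚ) = 1 := by
    apply RatFunc.algebraMap_injective ℚ
    simpa [qq, RatFunc.algebraMap_X] using h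
  have := congrArg Polynomial.natDegree h'
  simp at this
  exact hk this

theorem qq_pow_sub_inv_ne_zero {k : ℕ} (hk : k ≠ 0) : qq ^ k - qq⁻¹ ^ k ≠ 0 := by
  intro h
  have h0 := pow_ne_zero k qq_ne_zero
  apply qq_pow_ne_one (k := k + k) (by omega)
  rw [sub_eq_zero, inv_pow] at h
  rw [pow_add]
  nth_rewrite 1 [h]
  exact inv_mul_cancel₀ h0

theorem qInt_ne_zero {dd m : ℕ} (hd : dd ≠ 0) (hm : m ≠ 0) : qInt dd m ≠ 0 :=
  div_ne_zero (qq_pow_sub_inv_ne_zero (mul_ne_zero hd hm)) (qq_pow_sub_inv_ne_zero hd)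

theorem qFact_ne_zero {dd : ℕ} (hd : dd ≠ 0) (m : ℕ) : qFact dd m ≠ 0 := by
  induction m with
  | zero => exact one_ne_zero
  | succ m ih => exact mul_ne_zero (qInt_ne_zero hd m.succ_ne_zero) ih

theorem qBinom_zero_right {dd : ℕ} (hd : dd ≠ 0) (m : ℕ) : qBinom dd m 0 = 1 := by
  simp [qBinom, qFact, qFact_ne_zero hd]

theorem qBinom_self {dd : ℕ} (hd : dd ≠ 0) (m : ℕ) : qBinom dd m m = 1 := by
  simp [qBinom, qFact, qFact_ne_zero hd]

theorem qBinom_symm (dd : ℕ) {m r : ℕ} (h : r ≤ m) : qBinom dd m (m - r) = qBinom dd m r := by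
  rw [qBinom, qBinom, Nat.sub_sub_self h, mul_comm]

theorem qInt_add (dd m r : ℕ) :
    qInt dd (m + r) = (qq ^ dd) ^ r * qInt dd m + ((qq ^ dd)⁻¹) ^ m * qInt dd r := by
  have h0 := qq_ne_zero
  simp only [qInt, mul_div_assoc', ← add_div]
  congr 1
  simp only [mul_add, pow_add, inv_pow, ← pow_mul, mul_sub]
  field_simp
  ring

theorem qInt_add' (dd m r : ℕ) :
    qInt dd (m + r) = ((qq ^ dd)⁻¹) ^ r * qInt dd m + (qq ^ dd) ^ m * qInt dd r := by
  rw [add_comm m r, qInt_add, add_comm]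

/-- Any splitting of the quantum integer `[m + r + 2]` yields a Pascal rule. -/
theorem qBinom_succ_succ {dd : ℕ} (hd : dd ≠ 0) {m r : ℕ} {x y : 𝔽}
    (h : qInt dd (m + 1 + (r + 1)) = x * qInt dd (m + 1) + y * qInt dd (r + 1)) :
    qBinom dd (m + r + 2) (r + 1)
      = x * qBinom dd (m + r + 1) (r + 1) + y * qBinom dd (m + r + 1) r := by
  have e1 : m + r + 2 - (r + 1) = m + 1 := by omega
  have e2 : m + r + 1 - (r + 1) = m := by omega
  have e3 : m + r + 1 - r = m + 1 := by omega
  have e4 : qFact dd (m + r + 2) = qInt dd (m + 1 + (r + 1)) * qFact dd (m + r + 1) := by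
    rw [show m + 1 + (r + 1) = m + r + 1 + 1 by omega]; rfl
  have hm := qInt_ne_zero hd m.succ_ne_zero
  have hr := qInt_ne_zero hd r.succ_ne_zero
  have fm := qFact_ne_zero hd m
  have fr := qFact_ne_zero hd r
  simp only [qBinom, e1, e2, e3, e4, h]
  simp only [show ∀ k, qFact dd (k + 1) = qInt dd (k + 1) * qFact dd k from fun _ => rfl]
  field_simp

section Serre

variable {A : Type*} [Ring A] [Algebra 𝔽 A]

/-- The quantum Serre element. -/
def serre (dd N : ℕ) (X Y : A) : A :=
  ∑ r ∈ range (N + 1), ((-1 : 𝔽) ^ r * qBinom dd N r) • (X ^ r * Y * X ^ (N - r))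

/-- The iterated `q`-commutators of `Y` with `X`, with parameters `c`. -/
def qComm (c : ℕ → 𝔽) (X Y : A) : ℕ → A
  | 0 => Y
  | k + 1 => qComm c X Y k * X - c k • (X * qComm c X Y k)

theorem sum_eq_qComm (b : ℕ → ℕ → 𝔽) (w : 𝔽) (hw : w ≠ 0) (h0 : ∀ m, b m 0 = 1)
    (h1 : ∀ m, b m m = 1)
    (hb : ∀ m r, b (m + r + 2) (r + 1)
      = w ^ (r + 1) * b (m + r + 1) (r + 1) + w⁻¹ ^ (m + 1) * b (m + r + 1) r)
    (X Y : A) (N : ℕ) (s : 𝔽) :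
    ∑ r ∈ range (N + 1), ((-1 : 𝔽) ^ r * b N r * s ^ r) • (X ^ r * Y * X ^ (N - r))
      = qComm (fun k => s * w ^ ((N : ℤ) - 1 - 2 * k)) X Y N := by
  induction N generalizing s with
  | zero => simp [qComm, h0]
  | succ N ih =>
    have hc : ∀ k : ℕ, s * w ^ (((N + 1 : ℕ) : ℤ) - 1 - 2 * k)
        = s * w * w ^ ((N : ℤ) - 1 - 2 * k) := by
      intro k
      rw [mul_assoc, ← zpow_one_add₀ hw]
      congr 2
      push_cast
      ring
    have hN : s * w * w ^ ((N : ℤ) - 1 - 2 * N) = s * w⁻¹ ^ N := by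
      rw [mul_assoc, ← zpow_one_add₀ hw, inv_pow, ← zpow_natCast w N, ← zpow_neg]
      congr 2
      ring
    simp only [hc, qComm, ← ih]
    rw [hN]
    rw [sum_range_succ' _ (N + 1), sum_range_succ _ N, sum_mul, mul_sum, smul_sum,
      sum_range_succ' _ N, sum_range_succ _ N]
    have key : ∀ r ∈ range N,
        ((-1 : 𝔽) ^ (r + 1) * b (N + 1) (r + 1) * s ^ (r + 1)) •
            (X ^ (r + 1) * Y * X ^ (N + 1 - (r + 1)))
        = ((-1 : 𝔽) ^ (r + 1) * b N (r + 1) * (s * w) ^ (r + 1)) •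
            (X ^ (r + 1) * Y * X ^ (N - (r + 1))) * X
          - (s * w⁻¹ ^ N) • (X * ((-1 : 𝔽) ^ r * b N r * (s * w) ^ r) •
            (X ^ r * Y * X ^ (N - r))) := by
      intro r hr
      obtain ⟨m, rfl⟩ : ∃ m, N = m + r + 1 := ⟨N - r - 1, by have := mem_range.1 hr; omega⟩
      rw [hb]
      simp only [show m + r + 1 + 1 - (r + 1) = m + 1 by omega,
        show m + r + 1 - (r + 1) = m by omega, show m + r + 1 - r = m + 1 by omega,
        smul_mul_assoc, mul_smul_comm, smul_smul]
      rw [show X * (X ^ r * Y * X ^ (m + 1)) = X ^ (r + 1) * Y * X ^ (m + 1) by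
          simp only [pow_succ' X r, mul_assoc],
        show X ^ (r + 1) * Y * X ^ m * X = X ^ (r + 1) * Y * X ^ (m + 1) by
          simp only [pow_succ X m, mul_assoc], ← sub_smul]
      congr 1
      simp only [inv_pow]
      field_simp
      ring
    rw [sum_congr rfl key, sum_sub_distrib]
    have e1 : ((-1 : 𝔽) ^ (N + 1) * b (N + 1) (N + 1) * s ^ (N + 1)) •
          (X ^ (N + 1) * Y * X ^ (N + 1 - (N + 1)))
        = - ((s * w⁻¹ ^ N) • (X * ((-1 : 𝔽) ^ N * b N N * (s * w) ^ N) •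
            (X ^ N * Y * X ^ (N - N)))) := by
      simp only [h1, mul_smul_comm, smul_smul, ← neg_smul, Nat.sub_self, pow_zero, mul_one]
      rw [pow_succ' X N, mul_assoc X]
      congr 1
      simp only [inv_pow]
      field_simp
      ring
    rw [e1]
    simp only [h0, pow_zero, one_mul, mul_one, one_smul, Nat.sub_zero, pow_succ X N, mul_assoc]
    abel

theorem serre_eq_qComm {dd : ℕ} (hd : dd ≠ 0) (N : ℕ) (X Y : A) :
    serre dd N X Y = qComm (fun k => (qq ^ dd) ^ ((N : ℤ) - 1 - 2 * k)) X Y N := by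
  have h := sum_eq_qComm (qBinom dd) (qq ^ dd) (pow_ne_zero _ qq_ne_zero)
    (qBinom_zero_right hd) (qBinom_self hd)
    (fun m r => qBinom_succ_succ hd (qInt_add dd (m + 1) (r + 1))) X Y N 1
  simpa only [serre, one_pow, mul_one, one_mul] using h

/-- The factors of the Serre element may be taken in the opposite order. -/
theorem serre_eq_qComm_rev {dd : ℕ} (hd : dd ≠ 0) (N : ℕ) (X Y : A) :
    serre dd N X Y = qComm (fun k => (qq ^ dd) ^ (1 - (N : ℤ) + 2 * k)) X Y N := by
  have h := sum_eq_qComm (qBinom dd) (qq ^ dd)⁻¹ (inv_ne_zero (pow_ne_zero _ qq_ne_zero))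
    (qBinom_zero_right hd) (qBinom_self hd)
    (fun m r => qBinom_succ_succ hd (by
      rw [inv_inv]; exact qInt_add' dd (m + 1) (r + 1))) X Y N 1
  simp only [one_pow, mul_one, one_mul, inv_zpow'] at h
  rw [serre, h]
  congr 1
  ext k
  congr 1
  ring

theorem mul_qComm {B X Y : A} {c : ℕ → 𝔽} {t u : 𝔽} (hX : B * X = u • (X * B))
    (hY : B * Y = t • (Y * B)) (k : ℕ) :
    B * qComm c X Y k = (t * u ^ k) • (qComm c X Y k * B) := by
  induction k with
  | zero => simpa [qComm] using hY
  | succ k ih =>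
    have e1 : B * (qComm c X Y k * X) = (t * u ^ (k + 1)) • (qComm c X Y k * X * B) := by
      rw [← mul_assoc, ih, smul_mul_assoc, mul_assoc, hX, mul_smul_comm, smul_smul, mul_assoc,
        pow_succ, mul_assoc]
    have e2 : B * (X * qComm c X Y k) = (t * u ^ (k + 1)) • (X * qComm c X Y k * B) := by
      rw [← mul_assoc, hX, smul_mul_assoc, mul_assoc, ih, mul_smul_comm, smul_smul, mul_assoc,
        pow_succ, mul_comm u, mul_assoc]
    rw [qComm, mul_sub, sub_mul, mul_smul_comm, smul_mul_assoc, e1, e2, smul_sub, smul_comm (c k)]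

theorem qComm_mul {B X Y : A} {c : ℕ → 𝔽} {t u : 𝔽} (hX : X * B = u • (B * X))
    (hY : Y * B = t • (B * Y)) (k : ℕ) :
    qComm c X Y k * B = (t * u ^ k) • (B * qComm c X Y k) := by
  induction k with
  | zero => simpa [qComm] using hY
  | succ k ih =>
    have e1 : qComm c X Y k * X * B = (t * u ^ (k + 1)) • (B * (qComm c X Y k * X)) := by
      rw [mul_assoc, hX, mul_smul_comm, ← mul_assoc, ih, smul_mul_assoc, smul_smul, mul_assoc,
        pow_succ, mul_comm u, mul_assoc]
    have e2 : X * qComm c X Y k * B = (t * u ^ (k + 1)) • (B * (X * qComm c X Y k)) := by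
      rw [mul_assoc, ih, mul_smul_comm, ← mul_assoc, hX, smul_mul_assoc, smul_smul, mul_assoc,
        pow_succ, mul_assoc]
    rw [qComm, mul_sub, sub_mul, mul_smul_comm, smul_mul_assoc, e1, e2, smul_sub, smul_comm (c k)]

theorem serre_add_eq_left {dd : ℕ} (hd : dd ≠ 0) (N : ℕ) {X B Y : A}
    (hX : B * X = ((qq ^ dd) ^ 2) • (X * B))
    (hY : B * Y = ((qq ^ dd) ^ (1 - (N : ℤ))) • (Y * B)) :
    serre dd N (X + B) Y = serre dd N X Y := by
  have hw : qq ^ dd ≠ 0 := pow_ne_zero _ qq_ne_zero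
  rw [serre_eq_qComm hd, serre_eq_qComm hd]
  suffices ∀ k, qComm (fun k : ℕ => (qq ^ dd) ^ ((N : ℤ) - 1 - 2 * k)) (X + B) Y k
      = qComm (fun k : ℕ => (qq ^ dd) ^ ((N : ℤ) - 1 - 2 * k)) X Y k from this N
  intro k
  induction k with
  | zero => rfl
  | succ k ih =>
    have h := mul_qComm (c := fun k : ℕ => (qq ^ dd) ^ ((N : ℤ) - 1 - 2 * k)) hX hY k
    have hc : (qq ^ dd) ^ ((N : ℤ) - 1 - 2 * k) *
        ((qq ^ dd) ^ (1 - (N : ℤ)) * ((qq ^ dd) ^ 2) ^ k) = 1 := by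
      rw [← pow_mul, ← zpow_natCast (qq ^ dd), ← zpow_add₀ hw, ← zpow_add₀ hw]
      convert zpow_zero _ using 2
      push_cast
      ring
    rw [qComm, qComm, ih, mul_add, add_mul, smul_add, h, smul_smul, hc, one_smul]
    abel

theorem serre_add_eq_right {dd : ℕ} (hd : dd ≠ 0) (N : ℕ) {X B Y : A}
    (hX : B * X = ((qq ^ dd) ^ 2) • (X * B))
    (hY : Y * X = ((qq ^ dd) ^ (1 - (N : ℤ))) • (X * Y)) :
    serre dd N (X + B) Y = serre dd N B Y := by
  have hw : qq ^ dd ≠ 0 := pow_ne_zero _ qq_ne_zero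
  rw [serre_eq_qComm_rev hd, serre_eq_qComm_rev hd]
  suffices ∀ k, qComm (fun k : ℕ => (qq ^ dd) ^ (1 - (N : ℤ) + 2 * k)) (X + B) Y k
      = qComm (fun k : ℕ => (qq ^ dd) ^ (1 - (N : ℤ) + 2 * k)) B Y k from this N
  intro k
  induction k with
  | zero => rfl
  | succ k ih =>
    have h := qComm_mul (c := fun k : ℕ => (qq ^ dd) ^ (1 - (N : ℤ) + 2 * k)) hX hY k
    have hc : (qq ^ dd) ^ (1 - (N : ℤ)) * ((qq ^ dd) ^ 2) ^ k
        = (qq ^ dd) ^ (1 - (N : ℤ) + 2 * k) := by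
      rw [← pow_mul, ← zpow_natCast (qq ^ dd), ← zpow_add₀ hw]
      push_cast
      rfl
    rw [hc] at h
    rw [qComm, qComm, ih, mul_add, add_mul, smul_add, h]
    abel

theorem serre_add_right (dd N : ℕ) (X Y Z : A) :
    serre dd N X (Y + Z) = serre dd N X Y + serre dd N X Z := by
  simp only [serre, mul_add, add_mul, smul_add, sum_add_distrib]

theorem map_serre {B : Type*} [Ring B] [Algebra 𝔽 B] (φ : A →ₐ[𝔽] B) (dd N : ℕ) (X Y : A) :
    φ (serre dd N X Y) = serre dd N (φ X) (φ Y) := by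
  simp only [serre, map_sum, map_smul, map_mul, map_pow]

theorem serre_op (dd N : ℕ) (X Y : A) :
    serre dd N (MulOpposite.op X) (MulOpposite.op Y)
      = (-1 : 𝔽) ^ N • MulOpposite.op (serre dd N X Y) := by
  rw [serre, serre, ← sum_range_reflect, op_sum, smul_sum]
  refine sum_congr rfl fun r hr => ?_
  have hr' : r ≤ N := Nat.lt_succ_iff.1 (mem_range.1 hr)
  obtain ⟨m, rfl⟩ := Nat.exists_eq_add_of_le hr'
  have hs := qBinom_symm dd hr'
  rw [Nat.add_sub_cancel_left] at hs
  simp only [hs, Nat.add_sub_cancel_left, Nat.add_sub_cancel, MulOpposite.op_smul, smul_smul,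
    MulOpposite.op_mul, MulOpposite.op_pow, mul_assoc]
  congr 1
  rw [pow_add, mul_mul_mul_comm, ← pow_add _ r r, Even.neg_one_pow ⟨r, rfl⟩, one_mul]

/-- The Serre relation is inherited by twists of `x`, `y` by `q`-commuting elements. -/
theorem serre_twist (dd N : ℕ) {x y κ l : A} {t u : 𝔽} (hxk : x * κ = u • (κ * x))
    (hxl : x * l = t • (l * x)) (hyk : y * κ = t • (κ * y)) (hkl : κ * l = l * κ)
    (h : serre dd N x y = 0) : serre dd N (κ * x) (l * y) = 0 := by
  have hx : ∀ m : ℕ, x * κ ^ m = u ^ m • (κ ^ m * x) := by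
    intro m
    induction m with
    | zero => simp
    | succ m ih =>
      rw [pow_succ, ← mul_assoc, ih, smul_mul_assoc, mul_assoc, hxk, mul_smul_comm, smul_smul,
        pow_succ, mul_assoc]
  have hxr : ∀ m : ℕ, x ^ m * κ = u ^ m • (κ * x ^ m) := by
    intro m
    induction m with
    | zero => simp
    | succ m ih =>
      rw [pow_succ, mul_assoc, hxk, mul_smul_comm, ← mul_assoc, ih, smul_mul_assoc, smul_smul,
        pow_succ, mul_comm u, mul_assoc]
  have hkl' : ∀ m : ℕ, κ ^ m * l = l * κ ^ m := fun m => Commute.pow_left hkl m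
  obtain ⟨c, hc⟩ : ∃ c : ℕ → 𝔽, ∀ r s : ℕ, (κ * x) ^ r * (l * y) * (κ * x) ^ s
      = c (r + s) • (κ ^ (r + s) * l * (x ^ r * y * x ^ s)) := by
    refine ⟨fun m => ∏ k ∈ range m, u ^ k * t, fun r s => ?_⟩
    induction s with
    | zero =>
      induction r with
      | zero => simp
      | succ r ih =>
        simp only [pow_zero, mul_one, add_zero] at ih ⊢
        have e : ∀ z, x * (κ ^ r * (l * z)) = (u ^ r * t) • (κ ^ r * (l * (x * z))) := by
          intro z
          rw [← mul_assoc x, hx, smul_mul_assoc, mul_assoc, ← mul_assoc x, hxl, smul_mul_assoc,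
            mul_smul_comm, smul_smul, mul_assoc l]
        rw [pow_succ', mul_assoc, ih, mul_smul_comm, mul_assoc κ, mul_assoc, e, mul_smul_comm,
          smul_smul, prod_range_succ, pow_succ' κ, pow_succ' x]
        simp only [mul_assoc]
    | succ s ih =>
      rw [pow_succ, ← mul_assoc, ih, smul_mul_assoc]
      have e : x ^ r * y * x ^ s * (κ * x)
          = (u ^ (r + s) * t) • (κ * (x ^ r * y * x ^ (s + 1))) := by
        have e1 : ∀ z, x ^ s * (κ * z) = u ^ s • (κ * (x ^ s * z)) := by
          intro z; rw [← mul_assoc, hxr, smul_mul_assoc, mul_assoc]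
        have e2 : ∀ z, y * (κ * z) = t • (κ * (y * z)) := by
          intro z; rw [← mul_assoc, hyk, smul_mul_assoc, mul_assoc]
        have e3 : ∀ z, x ^ r * (κ * z) = u ^ r • (κ * (x ^ r * z)) := by
          intro z; rw [← mul_assoc, hxr, smul_mul_assoc, mul_assoc]
        simp only [mul_assoc, e1, e2, e3, mul_smul_comm, smul_smul, pow_succ x s]
        congr 1
        rw [pow_add]
        ring
      rw [mul_assoc, e, mul_smul_comm, smul_smul, ← add_assoc]
      dsimp only
      rw [prod_range_succ, ← mul_assoc (_ * l), mul_assoc _ l, ← hkl, ← mul_assoc _ κ, ← pow_succ]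
  have : serre dd N (κ * x) (l * y) = c N • (κ ^ N * l * serre dd N x y) := by
    rw [serre, serre, mul_sum, smul_sum]
    refine sum_congr rfl fun r hr => ?_
    have hr' : r + (N - r) = N := by have := mem_range.1 hr; omega
    rw [hc, hr', mul_smul_comm, smul_comm]
  rw [this, h, mul_zero, smul_zero]

end Serre
end ChariXi

namespace ChariXi

section QCommute

variable {A : Type*} [Ring A] [Algebra 𝔽 A] {k k' x : A} {c : 𝔽}

theorem mul_inv_of_qCommute (h1 : k * k' = 1) (h2 : k' * k = 1) (h : k * x = c • (x * k)) :
    x * k' = c • (k' * x) := by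
  calc x * k' = k' * (k * x) * k' := by rw [← mul_assoc, h2, one_mul]
    _ = c • (k' * x) := by
      rw [h, mul_smul_comm, smul_mul_assoc, mul_assoc, mul_assoc, h1, mul_one]

theorem mul_of_qCommute (hc : c ≠ 0) (h : k * x = c • (x * k)) : x * k = c⁻¹ • (k * x) := by
  rw [h, smul_smul, inv_mul_cancel₀ hc, one_smul]

end QCommute

section Rep

variable {n : ℕ} (a : Fin n → Fin n → ℤ) (d : Fin n → ℕ)

/-- Elements `e i`, `f i`, `k i`, `k' i` of an algebra satisfying the defining relations
of `U_q(𝔤)`. -/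
structure IsRep {A : Type*} [Ring A] [Algebra 𝔽 A] (e f k k' : Fin n → A) : Prop where
  mul_inv : ∀ i, k i * k' i = 1
  inv_mul : ∀ i, k' i * k i = 1
  kk : ∀ i j, k i * k j = k j * k i
  ke : ∀ i j, k i * e j = (qq ^ ((d i : ℤ) * a i j)) • (e j * k i)
  kf : ∀ i j, k i * f j = (qq ^ (-((d i : ℤ) * a i j))) • (f j * k i)
  ef : ∀ i j, e i * f j - f j * e i
    = if i = j then (qq ^ (d i) - qq⁻¹ ^ (d i))⁻¹ • (k i - k' i) else 0
  serre_e : ∀ i j, i ≠ j → serre (d i) (1 - a i j).toNat (e i) (e j) = 0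
  serre_f : ∀ i j, i ≠ j → serre (d i) (1 - a i j).toNat (f i) (f j) = 0

variable {a d}

theorem IsCartan.d_ne_zero (hC : IsCartan n a d) (i : Fin n) : d i ≠ 0 := by
  have := hC.dmem i
  simp only [Set.mem_insert_iff, Set.mem_singleton_iff] at this
  omega

theorem IsCartan.qq_zpow_self (hC : IsCartan n a d) (i : Fin n) :
    qq ^ ((d i : ℤ) * a i i) = (qq ^ d i) ^ 2 := by
  rw [hC.diag, zpow_mul, zpow_natCast]
  rfl

theorem IsCartan.qq_zpow (hC : IsCartan n a d) {i j : Fin n} (hij : i ≠ j) :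
    qq ^ ((d i : ℤ) * a i j) = (qq ^ d i) ^ (1 - ((1 - a i j).toNat : ℤ)) := by
  have := hC.offdiag i j hij
  rw [zpow_mul, zpow_natCast]
  congr 1
  omega

theorem isRep_generators :
    IsRep a d (Eg n a d) (Fg n a d) (Kg n a d) (Kinvg n a d) where
  mul_inv i := by simpa [Kg, Kinvg, mk] using RingQuot.mkAlgHom_rel 𝔽 (Rel.KKinv (a := a) (d := d) i)
  inv_mul i := by simpa [Kg, Kinvg, mk] using RingQuot.mkAlgHom_rel 𝔽 (Rel.KinvK (a := a) (d := d) i)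
  kk i j := by simpa [Kg, mk] using RingQuot.mkAlgHom_rel 𝔽 (Rel.KK (a := a) (d := d) i j)
  ke i j := by simpa [Kg, Eg, mk] using RingQuot.mkAlgHom_rel 𝔽 (Rel.KE (a := a) (d := d) i j)
  kf i j := by
    have h := RingQuot.mkAlgHom_rel 𝔽 (Rel.KF (a := a) (d := d) i j)
    rwa [map_mul, map_smul, map_mul] at h
  ef i j := by
    have h := RingQuot.mkAlgHom_rel 𝔽 (Rel.EF (a := a) (d := d) i j)
    rw [map_sub, map_mul, map_mul, apply_ite (RingQuot.mkAlgHom 𝔽 (Rel n a d)), map_smul, map_sub,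
      map_zero] at h
    exact h
  serre_e i j hij := by
    have h := RingQuot.mkAlgHom_rel 𝔽 (Rel.serreE (a := a) (d := d) i j hij)
    rw [map_zero] at h
    exact (map_serre (mk n a d) _ _ _ _).symm.trans h
  serre_f i j hij := by
    have h := RingQuot.mkAlgHom_rel 𝔽 (Rel.serreF (a := a) (d := d) i j hij)
    rw [map_zero] at h
    exact (map_serre (mk n a d) _ _ _ _).symm.trans h

theorem algHom_ext_generators {B : Type*} [Semiring B] [Algebra 𝔽 B] {φ ψ : U n a d →ₐ[𝔽] B}
    (hE : ∀ i, φ (Eg n a d i) = ψ (Eg n a d i)) (hF : ∀ i, φ (Fg n a d i) = ψ (Fg n a d i))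
    (hK : ∀ i, φ (Kg n a d i) = ψ (Kg n a d i))
    (hK' : ∀ i, φ (Kinvg n a d i) = ψ (Kinvg n a d i)) : φ = ψ := by
  apply RingQuot.ringQuot_ext'
  apply FreeAlgebra.hom_ext
  funext g
  cases g with
  | E i => exact hE i
  | F i => exact hF i
  | K i => exact hK i
  | Kinv i => exact hK' i

/-- Induction on the generators of `U_q(𝔤)`. -/
theorem U_induction {P : U n a d → Prop} (hE : ∀ i, P (Eg n a d i)) (hF : ∀ i, P (Fg n a d i))
    (hK : ∀ i, P (Kg n a d i)) (hK' : ∀ i, P (Kinvg n a d i)) (hc : ∀ c, P (algebraMap 𝔽 _ c))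
    (hadd : ∀ x y, P x → P y → P (x + y)) (hmul : ∀ x y, P x → P y → P (x * y)) (x) : P x := by
  obtain ⟨y, rfl⟩ := RingQuot.mkAlgHom_surjective 𝔽 (Rel n a d) x
  induction y using FreeAlgebra.induction with
  | grade0 c => rw [AlgHom.commutes]; exact hc c
  | grade1 g =>
    cases g with
    | E i => exact hE i
    | F i => exact hF i
    | K i => exact hK i
    | Kinv i => exact hK' i
  | mul x y hx hy => rw [map_mul]; exact hmul _ _ hx hy
  | add x y hx hy => rw [map_add]; exact hadd _ _ hx hy

variable {A : Type*} [Ring A] [Algebra 𝔽 A] {e f k k' : Fin n → A}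

namespace IsRep

/-- The homomorphism from the free algebra with prescribed values on generators. -/
def freeLift (e f k k' : Fin n → A) : FreeAlgebra 𝔽 (Gen n) →ₐ[𝔽] A :=
  FreeAlgebra.lift 𝔽 fun
    | Gen.E i => e i
    | Gen.F i => f i
    | Gen.K i => k i
    | Gen.Kinv i => k' i

@[simp] theorem freeLift_E (i : Fin n) : freeLift e f k k' (Fr.E n i) = e i := by
  simp [freeLift, Fr.E]
@[simp] theorem freeLift_F (i : Fin n) : freeLift e f k k' (Fr.F n i) = f i := by
  simp [freeLift, Fr.F]
@[simp] theorem freeLift_K (i : Fin n) : freeLift e f k k' (Fr.K n i) = k i := by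
  simp [freeLift, Fr.K]
@[simp] theorem freeLift_Kinv (i : Fin n) : freeLift e f k k' (Fr.Kinv n i) = k' i := by
  simp [freeLift, Fr.Kinv]

/-- The universal property of `U_q(𝔤)`. -/
theorem exists_lift (h : IsRep a d e f k k') :
    ∃ φ : U n a d →ₐ[𝔽] A, (∀ i, φ (Eg n a d i) = e i) ∧ (∀ i, φ (Fg n a d i) = f i) ∧
      (∀ i, φ (Kg n a d i) = k i) ∧ (∀ i, φ (Kinvg n a d i) = k' i) := by
  have w : ∀ ⦃x y⦄, Rel n a d x y → freeLift e f k k' x = freeLift e f k k' y := by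
    intro x y hxy
    cases hxy with
    | KKinv i => simpa using h.mul_inv i
    | KinvK i => simpa using h.inv_mul i
    | KK i j => simpa using h.kk i j
    | KE i j => rw [map_mul, map_smul, map_mul]; simpa only [freeLift_K, freeLift_E] using h.ke i j
    | KF i j => rw [map_mul, map_smul, map_mul]; simpa only [freeLift_K, freeLift_F] using h.kf i j
    | EF i j =>
      rw [map_sub, map_mul, map_mul, apply_ite (freeLift e f k k'), map_smul, map_sub, map_zero]
      simpa only [freeLift_K, freeLift_E, freeLift_F, freeLift_Kinv] using h.ef i j
    | serreE i j hij =>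
      rw [map_zero]
      have := map_serre (freeLift e f k k') (d i) (1 - a i j).toNat (Fr.E n i) (Fr.E n j)
      rw [freeLift_E, freeLift_E, h.serre_e i j hij] at this
      exact this
    | serreF i j hij =>
      rw [map_zero]
      have := map_serre (freeLift e f k k') (d i) (1 - a i j).toNat (Fr.F n i) (Fr.F n j)
      rw [freeLift_F, freeLift_F, h.serre_f i j hij] at this
      exact this
  refine ⟨RingQuot.liftAlgHom 𝔽 ⟨freeLift e f k k', w⟩, ?_, ?_, ?_, ?_⟩ <;> intro i
  · exact (RingQuot.liftAlgHom_mkAlgHom_apply 𝔽 _ w _).trans (freeLift_E i)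
  · exact (RingQuot.liftAlgHom_mkAlgHom_apply 𝔽 _ w _).trans (freeLift_F i)
  · exact (RingQuot.liftAlgHom_mkAlgHom_apply 𝔽 _ w _).trans (freeLift_K i)
  · exact (RingQuot.liftAlgHom_mkAlgHom_apply 𝔽 _ w _).trans (freeLift_Kinv i)

theorem k_inv_comm (h : IsRep a d e f k k') (i j : Fin n) : k i * k' j = k' j * k i := by
  have := mul_inv_of_qCommute (c := 1) (x := k i) (h.mul_inv j) (h.inv_mul j)
    (by rw [one_smul]; exact h.kk j i)
  rwa [one_smul] at this

theorem inv_inv_comm (h : IsRep a d e f k k') (i j : Fin n) : k' i * k' j = k' j * k' i := by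
  have := mul_inv_of_qCommute (c := 1) (x := k' i) (h.mul_inv j) (h.inv_mul j)
    (by rw [one_smul]; exact h.k_inv_comm j i)
  rwa [one_smul] at this

theorem e_inv (h : IsRep a d e f k k') (i j : Fin n) :
    e j * k' i = (qq ^ ((d i : ℤ) * a i j)) • (k' i * e j) :=
  mul_inv_of_qCommute (h.mul_inv i) (h.inv_mul i) (h.ke i j)

theorem f_inv (h : IsRep a d e f k k') (i j : Fin n) :
    f j * k' i = (qq ^ (-((d i : ℤ) * a i j))) • (k' i * f j) :=
  mul_inv_of_qCommute (h.mul_inv i) (h.inv_mul i) (h.kf i j)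

theorem f_k (h : IsRep a d e f k k') (i j : Fin n) :
    f j * k i = (qq ^ ((d i : ℤ) * a i j)) • (k i * f j) := by
  have := mul_of_qCommute (zpow_ne_zero _ qq_ne_zero) (h.kf i j)
  rwa [← zpow_neg, neg_neg] at this

theorem inv_f (h : IsRep a d e f k k') (i j : Fin n) :
    k' i * f j = (qq ^ ((d i : ℤ) * a i j)) • (f j * k' i) := by
  rw [h.f_inv, smul_smul, ← zpow_add₀ qq_ne_zero, add_neg_cancel, zpow_zero, one_smul]

theorem neg_mul_mul_inv_add (h : IsRep a d e f k k') (i : Fin n) :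
    -(f i * k i) * k' i + f i = 0 := by
  rw [neg_mul, mul_assoc, h.mul_inv, mul_one, neg_add_cancel]

theorem add_mul_neg_inv_mul (h : IsRep a d e f k k') (i : Fin n) :
    e i + k i * -(k' i * e i) = 0 := by
  rw [mul_neg, ← mul_assoc, h.mul_inv, one_mul, add_neg_cancel]

theorem comul (hC : IsCartan n a d) (h : IsRep a d e f k k') :
    IsRep (A := A ⊗[𝔽] A) a d (fun i => e i ⊗ₜ 1 + k i ⊗ₜ e i) (fun i => f i ⊗ₜ k' i + 1 ⊗ₜ f i)
      (fun i => k i ⊗ₜ k i) (fun i => k' i ⊗ₜ k' i) where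
  mul_inv i := by
    simp only [Algebra.TensorProduct.tmul_mul_tmul, h.mul_inv, Algebra.TensorProduct.one_def]
  inv_mul i := by
    simp only [Algebra.TensorProduct.tmul_mul_tmul, h.inv_mul, Algebra.TensorProduct.one_def]
  kk i j := by simp only [Algebra.TensorProduct.tmul_mul_tmul, h.kk i j]
  ke i j := by
    simp only [mul_add, add_mul, Algebra.TensorProduct.tmul_mul_tmul, h.ke i j, h.kk i j, mul_one,
      one_mul, smul_add, TensorProduct.tmul_smul, TensorProduct.smul_tmul']
  kf i j := by
    simp only [mul_add, add_mul, Algebra.TensorProduct.tmul_mul_tmul, h.kf i j, h.k_inv_comm i j,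
      mul_one, one_mul, smul_add, TensorProduct.tmul_smul, TensorProduct.smul_tmul']
  ef i j := by
    have hcross : (k i * f j) ⊗ₜ[𝔽] (e i * k' j) = (f j * k i) ⊗ₜ[𝔽] (k' j * e i) := by
      rw [h.kf, h.e_inv, TensorProduct.tmul_smul, ← TensorProduct.smul_tmul', smul_smul,
        ← hC.symmetrizable i j, ← zpow_add₀ qq_ne_zero, add_neg_cancel, zpow_zero, one_smul]
    have hexp : (e i ⊗ₜ 1 + k i ⊗ₜ e i) * (f j ⊗ₜ k' j + 1 ⊗ₜ f j)
        - (f j ⊗ₜ k' j + 1 ⊗ₜ f j) * (e i ⊗ₜ 1 + k i ⊗ₜ e i)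
        = (e i * f j - f j * e i) ⊗ₜ[𝔽] k' j + k i ⊗ₜ[𝔽] (e i * f j - f j * e i) := by
      simp only [mul_add, add_mul, Algebra.TensorProduct.tmul_mul_tmul, mul_one, one_mul, hcross,
        TensorProduct.sub_tmul, TensorProduct.tmul_sub]
      abel
    rw [hexp, h.ef]
    split_ifs with hij
    · subst hij
      rw [← TensorProduct.smul_tmul', TensorProduct.tmul_smul, ← smul_add, TensorProduct.sub_tmul,
        TensorProduct.tmul_sub]
      congr 1
      abel
    · simp
  serre_e i j hij := by
    have hd := hC.d_ne_zero i
    rw [serre_add_right, serre_add_eq_left hd, serre_add_eq_right hd]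
    · have h1 := map_serre (Algebra.TensorProduct.includeLeft : A →ₐ[𝔽] A ⊗[𝔽] A) (d i)
        (1 - a i j).toNat (e i) (e j)
      have h2 := map_serre (Algebra.TensorProduct.includeRight : A →ₐ[𝔽] A ⊗[𝔽] A) (d i)
        (1 - a i j).toNat (e i) (e j)
      rw [h.serre_e i j hij, map_zero] at h1 h2
      have h3 := serre_twist (d i) (1 - a i j).toNat (x := (1 : A) ⊗ₜ[𝔽] e i) (y := 1 ⊗ₜ e j)
        (κ := k i ⊗ₜ 1) (l := k j ⊗ₜ 1) (t := 1) (u := 1) (by simp) (by simp) (by simp)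
        (by simp [h.kk i j]) h2.symm
      simp only [Algebra.TensorProduct.tmul_mul_tmul, mul_one, one_mul] at h3
      rw [h3, add_zero]
      exact h1.symm
    · rw [← hC.qq_zpow_self, Algebra.TensorProduct.tmul_mul_tmul,
        Algebra.TensorProduct.tmul_mul_tmul, h.ke, one_mul, mul_one, TensorProduct.smul_tmul']
    · rw [← hC.qq_zpow hij, Algebra.TensorProduct.tmul_mul_tmul,
        Algebra.TensorProduct.tmul_mul_tmul, h.ke, one_mul, mul_one, TensorProduct.smul_tmul',
        hC.symmetrizable i j]
    · rw [← hC.qq_zpow_self, Algebra.TensorProduct.tmul_mul_tmul,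
        Algebra.TensorProduct.tmul_mul_tmul, h.ke, one_mul, mul_one, TensorProduct.smul_tmul']
    · rw [← hC.qq_zpow hij, Algebra.TensorProduct.tmul_mul_tmul,
        Algebra.TensorProduct.tmul_mul_tmul, h.ke, one_mul, mul_one, TensorProduct.smul_tmul']
  serre_f i j hij := by
    have hd := hC.d_ne_zero i
    rw [add_comm (f i ⊗ₜ[𝔽] k' i), add_comm (f j ⊗ₜ[𝔽] k' j), serre_add_right,
      serre_add_eq_left hd, serre_add_eq_right hd]
    · have h1 := map_serre (Algebra.TensorProduct.includeLeft : A →ₐ[𝔽] A ⊗[𝔽] A) (d i)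
        (1 - a i j).toNat (f i) (f j)
      have h2 := map_serre (Algebra.TensorProduct.includeRight : A →ₐ[𝔽] A ⊗[𝔽] A) (d i)
        (1 - a i j).toNat (f i) (f j)
      rw [h.serre_f i j hij, map_zero] at h1 h2
      have h3 := serre_twist (d i) (1 - a i j).toNat (x := f i ⊗ₜ[𝔽] (1 : A)) (y := f j ⊗ₜ 1)
        (κ := 1 ⊗ₜ k' i) (l := 1 ⊗ₜ k' j) (t := 1) (u := 1) (by simp) (by simp) (by simp)
        (by simp [h.inv_inv_comm i j]) h1.symm
      simp only [Algebra.TensorProduct.tmul_mul_tmul, mul_one, one_mul] at h3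
      rw [h3, add_zero]
      exact h2.symm
    · rw [← hC.qq_zpow_self, Algebra.TensorProduct.tmul_mul_tmul,
        Algebra.TensorProduct.tmul_mul_tmul, h.inv_f, one_mul, mul_one, TensorProduct.tmul_smul]
    · rw [← hC.qq_zpow hij, Algebra.TensorProduct.tmul_mul_tmul,
        Algebra.TensorProduct.tmul_mul_tmul, h.inv_f, one_mul, mul_one, TensorProduct.tmul_smul,
        hC.symmetrizable i j]
    · rw [← hC.qq_zpow_self, Algebra.TensorProduct.tmul_mul_tmul,
        Algebra.TensorProduct.tmul_mul_tmul, h.inv_f, one_mul, mul_one, TensorProduct.tmul_smul]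
    · rw [← hC.qq_zpow hij, Algebra.TensorProduct.tmul_mul_tmul,
        Algebra.TensorProduct.tmul_mul_tmul, h.inv_f, one_mul, mul_one, TensorProduct.tmul_smul,
        hC.symmetrizable i j]

theorem counit : IsRep (A := 𝔽) a d (0 : Fin n → 𝔽) 0 1 1 := by
  constructor <;> intros <;> simp [serre]

theorem antipode (hC : IsCartan n a d) (h : IsRep a d e f k k') :
    IsRep (A := Aᵐᵒᵖ) a d (fun i => MulOpposite.op (-(k' i * e i)))
      (fun i => MulOpposite.op (-(f i * k i))) (fun i => MulOpposite.op (k' i))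
      (fun i => MulOpposite.op (k i)) where
  mul_inv i := by rw [← MulOpposite.op_mul, h.mul_inv, MulOpposite.op_one]
  inv_mul i := by rw [← MulOpposite.op_mul, h.inv_mul, MulOpposite.op_one]
  kk i j := by rw [← MulOpposite.op_mul, ← MulOpposite.op_mul, h.inv_inv_comm]
  ke i j := by
    rw [← MulOpposite.op_mul, ← MulOpposite.op_mul, ← MulOpposite.op_smul, neg_mul, mul_assoc,
      h.e_inv, mul_neg, ← mul_assoc (k' i), h.inv_inv_comm i j, mul_smul_comm, smul_neg, mul_assoc]
  kf i j := by
    rw [← MulOpposite.op_mul, ← MulOpposite.op_mul, ← MulOpposite.op_smul, neg_mul, mul_assoc,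
      h.k_inv_comm, mul_neg, ← mul_assoc, h.f_inv, smul_mul_assoc, smul_neg, mul_assoc]
  ef i j := by
    have hcross : f j * k j * (k' i * e i) = k' i * (f j * e i) * k j := by
      rw [mul_assoc, ← mul_assoc (k j), h.k_inv_comm, mul_assoc, h.ke, mul_smul_comm,
        mul_smul_comm, ← mul_assoc, h.f_inv, smul_mul_assoc, smul_smul, ← hC.symmetrizable i j,
        ← zpow_add₀ qq_ne_zero, add_neg_cancel, zpow_zero, one_smul]
      simp only [mul_assoc]
    rw [← MulOpposite.op_mul, ← MulOpposite.op_mul, ← MulOpposite.op_sub, neg_mul_neg, neg_mul_neg,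
      hcross, show k' i * (f j * e i) * k j - k' i * e i * (f j * k j)
        = -(k' i * (e i * f j - f j * e i) * k j) by noncomm_ring, h.ef]
    split_ifs with hij
    · subst hij
      rw [← MulOpposite.op_sub, ← MulOpposite.op_smul, mul_smul_comm, smul_mul_assoc, mul_sub,
        sub_mul, h.inv_mul, one_mul, mul_assoc, h.inv_mul, mul_one, ← smul_neg, neg_sub]
    · simp
  serre_e i j hij := by
    have := serre_twist (d i) (1 - a i j).toNat (x := e i) (y := e j) (κ := -k' i) (l := -k' j)
      (u := qq ^ ((d i : ℤ) * a i i)) (t := qq ^ ((d i : ℤ) * a i j))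
      (by rw [mul_neg, h.e_inv, neg_mul, smul_neg])
      (by rw [mul_neg, h.e_inv, neg_mul, smul_neg, hC.symmetrizable i j])
      (by rw [mul_neg, h.e_inv, neg_mul, smul_neg])
      (by rw [neg_mul_neg, neg_mul_neg, h.inv_inv_comm]) (h.serre_e i j hij)
    rw [serre_op, ← neg_mul, ← neg_mul, this, MulOpposite.op_zero, smul_zero]
  serre_f i j hij := by
    have := serre_twist (d i) (1 - a i j).toNat (x := f i) (y := f j)
      (κ := (-qq ^ ((d i : ℤ) * a i i)) • k i) (l := (-qq ^ ((d j : ℤ) * a j j)) • k j)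
      (u := qq ^ ((d i : ℤ) * a i i)) (t := qq ^ ((d i : ℤ) * a i j))
      (by rw [mul_smul_comm, h.f_k, smul_mul_assoc, smul_comm])
      (by rw [mul_smul_comm, h.f_k, smul_mul_assoc, smul_comm, hC.symmetrizable i j])
      (by rw [mul_smul_comm, h.f_k, smul_mul_assoc, smul_comm])
      (by rw [smul_mul_smul_comm, smul_mul_smul_comm, h.kk, mul_comm]) (h.serre_f i j hij)
    rw [serre_op, h.f_k, h.f_k, ← neg_smul, ← neg_smul, ← smul_mul_assoc, ← smul_mul_assoc, this,
      MulOpposite.op_zero, smul_zero]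

end IsRep

section Antipode

variable {H : Type*} [Ring H] [Algebra 𝔽 H]

/-- A left convolution inverse law on `x` and `y` passes to `x * y` when `S` is
anti-multiplicative. -/
theorem mul'_map_left_mul {Δ : H →ₐ[𝔽] H ⊗[𝔽] H} {ε : H →ₐ[𝔽] 𝔽} {S : H →ₗ[𝔽] H}
    (hS : ∀ x y, S (x * y) = S y * S x) {x y : H}
    (hx : LinearMap.mul' 𝔽 H (TensorProduct.map S LinearMap.id (Δ x)) = ε x • (1 : H))
    (hy : LinearMap.mul' 𝔽 H (TensorProduct.map S LinearMap.id (Δ y)) = ε y • (1 : H)) :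
    LinearMap.mul' 𝔽 H (TensorProduct.map S LinearMap.id (Δ (x * y))) = ε (x * y) • (1 : H) := by
  have key : ∀ (t : H ⊗[𝔽] H) (u v : H),
      LinearMap.mul' 𝔽 H (TensorProduct.map S LinearMap.id (t * u ⊗ₜ v))
        = S u * LinearMap.mul' 𝔽 H (TensorProduct.map S LinearMap.id t) * v := by
    intro t u v
    induction t using TensorProduct.induction_on with
    | zero => simp
    | tmul p r => simp [hS, mul_assoc]
    | add p r hp hr => simp only [add_mul, map_add, hp, hr, mul_add]
  have key' : ∀ w : H ⊗[𝔽] H,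
      LinearMap.mul' 𝔽 H (TensorProduct.map S LinearMap.id (Δ x * w))
        = ε x • LinearMap.mul' 𝔽 H (TensorProduct.map S LinearMap.id w) := by
    intro w
    induction w using TensorProduct.induction_on with
    | zero => simp
    | tmul u v => rw [key, hx]; simp
    | add p r hp hr => simp only [mul_add, map_add, hp, hr, smul_add]
  rw [map_mul, key', hy, smul_smul, map_mul]

/-- A right convolution inverse law on `x` and `y` passes to `x * y` when `S` is
anti-multiplicative. -/
theorem mul'_map_right_mul {Δ : H →ₐ[𝔽] H ⊗[𝔽] H} {ε : H →ₐ[𝔽] 𝔽} {S : H →ₗ[𝔽] H}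
    (hS : ∀ x y, S (x * y) = S y * S x) {x y : H}
    (hx : LinearMap.mul' 𝔽 H (TensorProduct.map LinearMap.id S (Δ x)) = ε x • (1 : H))
    (hy : LinearMap.mul' 𝔽 H (TensorProduct.map LinearMap.id S (Δ y)) = ε y • (1 : H)) :
    LinearMap.mul' 𝔽 H (TensorProduct.map LinearMap.id S (Δ (x * y))) = ε (x * y) • (1 : H) := by
  have key : ∀ (t : H ⊗[𝔽] H) (u v : H),
      LinearMap.mul' 𝔽 H (TensorProduct.map LinearMap.id S (u ⊗ₜ v * t))
        = u * LinearMap.mul' 𝔽 H (TensorProduct.map LinearMap.id S t) * S v := by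
    intro t u v
    induction t using TensorProduct.induction_on with
    | zero => simp
    | tmul p r => simp [hS, mul_assoc]
    | add p r hp hr => simp only [add_mul, map_add, hp, hr, mul_add]
  have key' : ∀ w : H ⊗[𝔽] H,
      LinearMap.mul' 𝔽 H (TensorProduct.map LinearMap.id S (w * Δ y))
        = ε y • LinearMap.mul' 𝔽 H (TensorProduct.map LinearMap.id S w) := by
    intro w
    induction w using TensorProduct.induction_on with
    | zero => simp
    | tmul u v => rw [key, hy]; simp
    | add p r hp hr => simp only [add_mul, map_add, hp, hr, smul_add]
  rw [map_mul, key', hx, smul_smul, map_mul, mul_comm]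

end Antipode

end Rep
end ChariXi

theorem chariXi_hopf_algebra (n : ℕ) (a : Fin n → Fin n → ℤ) (d : Fin n → ℕ)
    (hC : IsCartan n a d) :
    ∃ (Δ : U n a d →ₐ[𝔽] (U n a d ⊗[𝔽] U n a d)) (ε : U n a d →ₐ[𝔽] 𝔽)
      (S : U n a d →ₗ[𝔽] U n a d),
      -- values of the comultiplication on the generators
      (∀ i, Δ (Eg n a d i)
          = Eg n a d i ⊗ₜ[𝔽] (1 : U n a d) + Kg n a d i ⊗ₜ[𝔽] Eg n a d i) ∧
      (∀ i, Δ (Fg n a d i)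
          = Fg n a d i ⊗ₜ[𝔽] Kinvg n a d i + (1 : U n a d) ⊗ₜ[𝔽] Fg n a d i) ∧
      (∀ i, Δ (Kg n a d i) = Kg n a d i ⊗ₜ[𝔽] Kg n a d i) ∧
      -- coassociativity
      (∀ x, (TensorProduct.assoc 𝔽 (U n a d) (U n a d) (U n a d))
              ((TensorProduct.map Δ.toLinearMap LinearMap.id) (Δ x))
            = (TensorProduct.map LinearMap.id Δ.toLinearMap) (Δ x)) ∧
      -- counit laws
      (∀ x, (TensorProduct.lid 𝔽 (U n a d))
              ((TensorProduct.map ε.toLinearMap LinearMap.id) (Δ x)) = x) ∧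
      (∀ x, (TensorProduct.rid 𝔽 (U n a d))
              ((TensorProduct.map LinearMap.id ε.toLinearMap) (Δ x)) = x) ∧
      -- antipode laws
      (∀ x, (LinearMap.mul' 𝔽 (U n a d))
              ((TensorProduct.map S LinearMap.id) (Δ x)) = ε x • (1 : U n a d)) ∧
      (∀ x, (LinearMap.mul' 𝔽 (U n a d))
              ((TensorProduct.map LinearMap.id S) (Δ x)) = ε x • (1 : U n a d)) := by
  have hU := isRep_generators (a := a) (d := d)
  obtain ⟨Δ, hΔE, hΔF, hΔK, hΔK'⟩ := (hU.comul hC).exists_lift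
  obtain ⟨ε, hεE, hεF, hεK, hεK'⟩ := (IsRep.counit (n := n) (a := a) (d := d)).exists_lift
  obtain ⟨φ, hφE, hφF, hφK, hφK'⟩ := (hU.antipode hC).exists_lift
  simp only [Pi.zero_apply, Pi.one_apply] at hεE hεF hεK hεK'
  set S : U n a d →ₗ[𝔽] U n a d :=
    (MulOpposite.opLinearEquiv 𝔽).symm.toLinearMap ∘ₗ φ.toLinearMap with hS
  have hSapply : ∀ x, S x = MulOpposite.unop (φ x) := fun x => rfl
  have hSmul : ∀ x y, S (x * y) = S y * S x := fun x y => by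
    simp only [hSapply, map_mul, MulOpposite.unop_mul]
  have hS1 : S 1 = 1 := by rw [hSapply, map_one, MulOpposite.unop_one]
  have hSE : ∀ i, S (Eg n a d i) = -(Kinvg n a d i * Eg n a d i) := fun i => by
    rw [hSapply, hφE, MulOpposite.unop_op]
  have hSF : ∀ i, S (Fg n a d i) = -(Fg n a d i * Kg n a d i) := fun i => by
    rw [hSapply, hφF, MulOpposite.unop_op]
  have hSK : ∀ i, S (Kg n a d i) = Kinvg n a d i := fun i => by
    rw [hSapply, hφK, MulOpposite.unop_op]
  have hSK' : ∀ i, S (Kinvg n a d i) = Kg n a d i := fun i => by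
    rw [hSapply, hφK', MulOpposite.unop_op]
  refine ⟨Δ, ε, S, hΔE, hΔF, hΔK, fun x => ?_, fun x => ?_, fun x => ?_, fun x => ?_, fun x => ?_⟩
  · have h : ((Algebra.TensorProduct.assoc 𝔽 𝔽 𝔽 (U n a d) (U n a d) (U n a d)).toAlgHom.comp
        (Algebra.TensorProduct.map Δ (AlgHom.id 𝔽 _))).comp Δ
        = (Algebra.TensorProduct.map (AlgHom.id 𝔽 _) Δ).comp Δ := by
      apply algHom_ext_generators <;> intro i
      · simp [hΔE, hΔK, TensorProduct.add_tmul, TensorProduct.tmul_add,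
          Algebra.TensorProduct.one_def, add_assoc]
      · simp [hΔF, hΔK', TensorProduct.add_tmul, TensorProduct.tmul_add,
          Algebra.TensorProduct.one_def, add_assoc]
      · simp [hΔK]
      · simp [hΔK']
    exact AlgHom.congr_fun h x
  · have h : ((Algebra.TensorProduct.lid 𝔽 (U n a d)).toAlgHom.comp
        (Algebra.TensorProduct.map ε (AlgHom.id 𝔽 _))).comp Δ = AlgHom.id 𝔽 _ := by
      apply algHom_ext_generators <;> intro i
      · simp [hΔE, hεE, hεK]
      · simp [hΔF, hεF]
      · simp [hΔK, hεK]
      · simp [hΔK', hεK']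
    exact AlgHom.congr_fun h x
  · have h : ((Algebra.TensorProduct.rid 𝔽 𝔽 (U n a d)).toAlgHom.comp
        (Algebra.TensorProduct.map (AlgHom.id 𝔽 _) ε)).comp Δ = AlgHom.id 𝔽 _ := by
      apply algHom_ext_generators <;> intro i
      · simp [hΔE, hεE]
      · simp [hΔF, hεF, hεK']
      · simp [hΔK, hεK]
      · simp [hΔK', hεK']
    exact AlgHom.congr_fun h x
  · induction x using U_induction with
    | hE i => simp [hΔE, hεE, hSE, hSK]
    | hF i => simpa [hΔF, hεF, hSF, hS1] using hU.neg_mul_mul_inv_add i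
    | hK i => simp [hΔK, hεK, hSK, hU.inv_mul]
    | hK' i => simp [hΔK', hεK', hSK', hU.mul_inv]
    | hc c => simp [Algebra.algebraMap_eq_smul_one, Algebra.TensorProduct.one_def, hS1]
    | hadd x y hx hy => simp only [map_add, hx, hy, add_smul]
    | hmul x y hx hy => exact mul'_map_left_mul hSmul hx hy
  · induction x using U_induction with
    | hE i => simpa [hΔE, hεE, hSE, hS1] using hU.add_mul_neg_inv_mul i
    | hF i => simp [hΔF, hεF, hSF, hSK']
    | hK i => simp [hΔK, hεK, hSK, hU.mul_inv]
    | hK' i => simp [hΔK', hεK', hSK', hU.inv_mul]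
    | hc c => simp [Algebra.algebraMap_eq_smul_one, Algebra.TensorProduct.one_def, hS1]
    | hadd x y hx hy => simp only [map_add, hx, hy, add_smul]
    | hmul x y hx hy => exact mul'_map_right_mul hSmul hx hy
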